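/- Lemma 2.2: Let (u,v) be a classical solution of problem (1.1) on [0,T). Then there exists a constant M > 1 such that e^{v(x,t)} ≤ M e^{u(x,t)} and e^{u(x,t)} ≤ M e^{v(x,t)} for all (x,t) ∈ cl(B_R) × [0,T). -/

import Mathlib

/-!
The difference `w = v - u` is bounded above by a maximum principle. It satisfies
`w_t - Δw = λ₂ e^u - λ₁ e^v` in the ball and `∂w/∂η = e^u - e^v` on the sphere. Wherever
`w > C`, with `C ≥ 0` and `C ≥ log (λ₂ / λ₁)`, both right-hand sides are strictly negative, whereas
at a maximum of `w` over `cl(B_R) × [0,τ]` attained at a positive time one has `w_t ≥ 0`, and either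
`Δw ≤ 0` (interior point, `lap_sub_nonpos`) or `∂w/∂η ≥ 0` (boundary point). So if `C` also bounds
`w(·,0)` then `w ≤ C` throughout (`exists_sub_le`). The problem is symmetric under exchanging
`(u, λ₁)` and `(v, λ₂)`, so `u - v` is bounded above as well, and exponentiating gives the result.
-/

open Set Real Metric MeasureTheory Filter Topology

/-- The Euclidean Laplacian of `f : ℝⁿ → ℝ` at `x`, computed as the sum of second
directional derivatives along the coordinate directions. -/
noncomputable def lap {n : ℕ} (f : EuclideanSpace ℝ (Fin n) → ℝ)
    (x : EuclideanSpace ℝ (Fin n)) : ℝ :=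
  ∑ i : Fin n, iteratedDeriv 2 (fun s : ℝ => f (x + s • EuclideanSpace.single i (1 : ℝ))) 0

/-- The outward normal derivative `∇f · (x/R)` on the sphere of radius `R`. -/
noncomputable def normalDeriv {n : ℕ} (R : ℝ) (f : EuclideanSpace ℝ (Fin n) → ℝ)
    (x : EuclideanSpace ℝ (Fin n)) : ℝ :=
  deriv (fun s : ℝ => f (x + s • (R⁻¹ • x))) 0

/-- Admissible initial data for problem (1.1): nonnegative, smooth, radial with
nondecreasing radial profiles, and satisfying the compatibility conditions. -/
structure AdmissibleData (n : ℕ) (R : ℝ)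
    (u₀ v₀ : EuclideanSpace ℝ (Fin n) → ℝ) : Prop where
  u0_nonneg : ∀ x ∈ closedBall (0 : EuclideanSpace ℝ (Fin n)) R, 0 ≤ u₀ x
  v0_nonneg : ∀ x ∈ closedBall (0 : EuclideanSpace ℝ (Fin n)) R, 0 ≤ v₀ x
  u0_smooth : ContDiffOn ℝ (⊤ : ℕ∞) u₀ (closedBall (0 : EuclideanSpace ℝ (Fin n)) R)
  v0_smooth : ContDiffOn ℝ (⊤ : ℕ∞) v₀ (closedBall (0 : EuclideanSpace ℝ (Fin n)) R)
  u0_radial_mono : ∀ x ∈ closedBall (0 : EuclideanSpace ℝ (Fin n)) R,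
    ∀ y ∈ closedBall (0 : EuclideanSpace ℝ (Fin n)) R, ‖x‖ ≤ ‖y‖ → u₀ x ≤ u₀ y
  v0_radial_mono : ∀ x ∈ closedBall (0 : EuclideanSpace ℝ (Fin n)) R,
    ∀ y ∈ closedBall (0 : EuclideanSpace ℝ (Fin n)) R, ‖x‖ ≤ ‖y‖ → v₀ x ≤ v₀ y
  compat_u : ∀ x : EuclideanSpace ℝ (Fin n), ‖x‖ = R → normalDeriv R u₀ x = Real.exp (v₀ x)
  compat_v : ∀ x : EuclideanSpace ℝ (Fin n), ‖x‖ = R → normalDeriv R v₀ x = Real.exp (u₀ x)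
  compat_u' : ∀ x ∈ closedBall (0 : EuclideanSpace ℝ (Fin n)) R, 0 ≤ lap u₀ x + Real.exp (v₀ x)
  compat_v' : ∀ x ∈ closedBall (0 : EuclideanSpace ℝ (Fin n)) R, 0 ≤ lap v₀ x + Real.exp (u₀ x)

/-- A classical solution of problem (1.1) on `[0,T)` on the ball of radius `R`:
continuous on `cl(B_R) × [0,T)`, of class C²,¹ on `cl(B_R) × (0,T)`, satisfying the
equations `u_t = Δu + λ₁ e^v`, `v_t = Δv + λ₂ e^u` in `B_R × (0,T)`, the boundary
conditions `∂u/∂η = e^v`, `∂v/∂η = e^u` on `∂B_R × (0,T)`, and the initial conditions. -/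
structure IsClassicalSolution (n : ℕ) (R T lam1 lam2 : ℝ)
    (u v : EuclideanSpace ℝ (Fin n) → ℝ → ℝ)
    (u₀ v₀ : EuclideanSpace ℝ (Fin n) → ℝ) : Prop where
  cont_u : ContinuousOn (fun p : EuclideanSpace ℝ (Fin n) × ℝ => u p.1 p.2)
    ((closedBall (0 : EuclideanSpace ℝ (Fin n)) R) ×ˢ Ico (0 : ℝ) T)
  cont_v : ContinuousOn (fun p : EuclideanSpace ℝ (Fin n) × ℝ => v p.1 p.2)
    ((closedBall (0 : EuclideanSpace ℝ (Fin n)) R) ×ˢ Ico (0 : ℝ) T)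
  reg_space_u : ∀ t ∈ Ioo (0 : ℝ) T,
    ContDiffOn ℝ 2 (fun x => u x t) (closedBall (0 : EuclideanSpace ℝ (Fin n)) R)
  reg_space_v : ∀ t ∈ Ioo (0 : ℝ) T,
    ContDiffOn ℝ 2 (fun x => v x t) (closedBall (0 : EuclideanSpace ℝ (Fin n)) R)
  reg_time_u : ∀ x ∈ closedBall (0 : EuclideanSpace ℝ (Fin n)) R, ∀ t ∈ Ioo (0 : ℝ) T,
    DifferentiableAt ℝ (u x) t
  reg_time_v : ∀ x ∈ closedBall (0 : EuclideanSpace ℝ (Fin n)) R, ∀ t ∈ Ioo (0 : ℝ) T,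
    DifferentiableAt ℝ (v x) t
  pde_u : ∀ x ∈ ball (0 : EuclideanSpace ℝ (Fin n)) R, ∀ t ∈ Ioo (0 : ℝ) T,
    deriv (u x) t = lap (fun y => u y t) x + lam1 * Real.exp (v x t)
  pde_v : ∀ x ∈ ball (0 : EuclideanSpace ℝ (Fin n)) R, ∀ t ∈ Ioo (0 : ℝ) T,
    deriv (v x) t = lap (fun y => v y t) x + lam2 * Real.exp (u x t)
  bc_u : ∀ x : EuclideanSpace ℝ (Fin n), ‖x‖ = R → ∀ t ∈ Ioo (0 : ℝ) T,
    normalDeriv R (fun y => u y t) x = Real.exp (v x t)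
  bc_v : ∀ x : EuclideanSpace ℝ (Fin n), ‖x‖ = R → ∀ t ∈ Ioo (0 : ℝ) T,
    normalDeriv R (fun y => v y t) x = Real.exp (u x t)
  init_u : ∀ x ∈ closedBall (0 : EuclideanSpace ℝ (Fin n)) R, u x 0 = u₀ x
  init_v : ∀ x ∈ closedBall (0 : EuclideanSpace ℝ (Fin n)) R, v x 0 = v₀ x

/-- `(u,v)` blows up at time `T`: `limsup_{t→T⁻} sup_{cl(B_R)} (u(·,t) + v(·,t)) = ∞`. -/
def BlowsUpAt (n : ℕ) (R T : ℝ) (u v : EuclideanSpace ℝ (Fin n) → ℝ → ℝ) : Prop :=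
  ∀ M : ℝ, ∃ᶠ t in 𝓝[<] T, ∃ x ∈ closedBall (0 : EuclideanSpace ℝ (Fin n)) R, M < u x t + v x t

theorem deriv_nonneg_of_left_max {f : ℝ → ℝ} {f' a : ℝ} (hf : HasDerivAt f f' a)
    (h : ∀ᶠ s in 𝓝[<] a, f s ≤ f a) : 0 ≤ f' := by
  have hs : Tendsto (slope f a) (𝓝[<] a) (𝓝 f') :=
    (hasDerivAt_iff_tendsto_slope.mp hf).mono_left
      (nhdsWithin_mono _ fun s (hs : s < a) => hs.ne)
  refine ge_of_tendsto hs ?_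
  filter_upwards [h, self_mem_nhdsWithin] with s hsa hlt
  rw [slope_def_field]
  exact div_nonneg_of_nonpos (sub_nonpos.mpr hsa) (sub_nonpos.mpr (le_of_lt hlt))

theorem iteratedDeriv_two_nonpos_of_isLocalMax {f : ℝ → ℝ} {a : ℝ} (hc : ContinuousAt f a)
    (h : IsLocalMax f a) : iteratedDeriv 2 f a ≤ 0 := by
  by_contra! hpos
  have h2 : iteratedDeriv 2 f = deriv (deriv f) := by
    rw [iteratedDeriv_succ, iteratedDeriv_one]
  rw [h2] at hpos
  -- A positive second derivative would make `a` a local minimum too, so `f` is constant near `a`.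
  have hmin := isLocalMin_of_deriv_deriv_pos hpos h.deriv_eq_zero hc
  have hconst : f =ᶠ[𝓝 a] fun _ => f a := by
    filter_upwards [h, hmin] with s h1 h2 using le_antisymm h1 h2
  have : deriv (deriv f) a = 0 := by
    rw [hconst.deriv.deriv_eq]; simp
  linarith

theorem lap_sub_nonpos {n : ℕ} {f g : EuclideanSpace ℝ (Fin n) → ℝ}
    {x : EuclideanSpace ℝ (Fin n)} (hf : ContDiffAt ℝ 2 f x) (hg : ContDiffAt ℝ 2 g x)
    (h : IsLocalMax (fun y => f y - g y) x) : lap f x - lap g x ≤ 0 := by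
  unfold lap
  rw [← Finset.sum_sub_distrib]
  refine Finset.sum_nonpos fun i _ => ?_
  set ℓ : ℝ → EuclideanSpace ℝ (Fin n) :=
    fun s => x + s • EuclideanSpace.single i (1 : ℝ) with hℓ
  have hℓ0 : ℓ 0 = x := by simp [hℓ]
  have hℓd : ContDiff ℝ 2 ℓ := by fun_prop
  have hf' : ContDiffAt ℝ 2 (fun s => f (ℓ s)) 0 :=
    ContDiffAt.comp (0 : ℝ) (by rw [hℓ0]; exact hf) hℓd.contDiffAt
  have hg' : ContDiffAt ℝ 2 (fun s => g (ℓ s)) 0 :=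
    ContDiffAt.comp (0 : ℝ) (by rw [hℓ0]; exact hg) hℓd.contDiffAt
  have key := iteratedDeriv_sub (n := 2) hf' hg'
  change iteratedDeriv 2 (fun s => f (ℓ s)) 0 - iteratedDeriv 2 (fun s => g (ℓ s)) 0 ≤ 0
  rw [← key]
  refine iteratedDeriv_two_nonpos_of_isLocalMax (hf'.sub hg').continuousAt ?_
  have ht : Tendsto ℓ (𝓝 0) (𝓝 x) := by
    have := hℓd.continuous.tendsto 0
    rwa [hℓ0] at this
  have := ht.eventually h
  simpa [IsLocalMax, IsMaxFilter, hℓ0] using this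

theorem hasDerivAt_of_normalDeriv_eq_exp {n : ℕ} {R a : ℝ} {f : EuclideanSpace ℝ (Fin n) → ℝ}
    {x : EuclideanSpace ℝ (Fin n)} (h : normalDeriv R f x = Real.exp a) :
    HasDerivAt (fun s : ℝ => f (x + s • (R⁻¹ • x))) (Real.exp a) 0 := by
  unfold normalDeriv at h
  -- `deriv` is nonzero, hence not the junk value.
  have hd : DifferentiableAt ℝ (fun s : ℝ => f (x + s • (R⁻¹ • x))) 0 :=
    differentiableAt_of_deriv_ne_zero (by rw [h]; exact (Real.exp_pos a).ne')
  rw [← h]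
  exact hd.hasDerivAt

theorem IsClassicalSolution.swap {n : ℕ} {R T lam1 lam2 : ℝ}
    {u v : EuclideanSpace ℝ (Fin n) → ℝ → ℝ} {u₀ v₀ : EuclideanSpace ℝ (Fin n) → ℝ}
    (h : IsClassicalSolution n R T lam1 lam2 u v u₀ v₀) :
    IsClassicalSolution n R T lam2 lam1 v u v₀ u₀ :=
  ⟨h.cont_v, h.cont_u, h.reg_space_v, h.reg_space_u, h.reg_time_v, h.reg_time_u,
    h.pde_v, h.pde_u, h.bc_v, h.bc_u, h.init_v, h.init_u⟩

/-- The maximum principle for `v - u`. -/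
theorem exists_sub_le {n : ℕ} {R T lam1 lam2 : ℝ}
    (hR : 0 < R) (hT : 0 < T) (hlam1 : 0 < lam1) (hlam2 : 0 < lam2)
    {u v : EuclideanSpace ℝ (Fin n) → ℝ → ℝ} {u₀ v₀ : EuclideanSpace ℝ (Fin n) → ℝ}
    (hsol : IsClassicalSolution n R T lam1 lam2 u v u₀ v₀) :
    ∃ C : ℝ, ∀ x ∈ closedBall (0 : EuclideanSpace ℝ (Fin n)) R, ∀ t ∈ Ico (0 : ℝ) T,
      v x t - u x t ≤ C := by
  have hcont := hsol.cont_v.sub hsol.cont_u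
  have hcpt : IsCompact (closedBall (0 : EuclideanSpace ℝ (Fin n)) R) := isCompact_closedBall _ _
  obtain ⟨C₀, hC₀⟩ := (hcpt.prod (isCompact_singleton (x := (0 : ℝ)))).bddAbove_image
    (hcont.mono (prod_mono_right (by simpa using hT)))
  have hinit : ∀ x ∈ closedBall (0 : EuclideanSpace ℝ (Fin n)) R, v x 0 - u x 0 ≤ C₀ :=
    fun x hx => hC₀ ⟨(x, 0), ⟨hx, rfl⟩, rfl⟩
  set C := max C₀ (max 0 (Real.log (lam2 / lam1))) with hC
  refine ⟨C, fun y hy τ hτ => ?_⟩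
  by_contra! hgt
  have hsub : Icc 0 τ ⊆ Ico 0 T := fun s hs => ⟨hs.1, hs.2.trans_lt hτ.2⟩
  obtain ⟨⟨x, t⟩, ⟨hx, ht⟩, hmax⟩ := (hcpt.prod (isCompact_Icc (a := (0 : ℝ)) (b := τ))).exists_isMaxOn
    ⟨(y, τ), hy, hτ.1, le_rfl⟩ (hcont.mono (prod_mono_right hsub))
  simp only at hx ht
  have hmax' : ∀ z ∈ closedBall (0 : EuclideanSpace ℝ (Fin n)) R, ∀ s ∈ Icc 0 τ,
      v z s - u z s ≤ v x t - u x t := fun z hz s hs => hmax (a := (z, s)) ⟨hz, hs⟩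
  have hw : C < v x t - u x t := hgt.trans_le (hmax' y hy τ ⟨hτ.1, le_rfl⟩)
  have ht0 : 0 < t := by
    rcases ht.1.eq_or_lt with h | h
    · have := hinit x hx
      rw [← h] at hw
      linarith [le_max_left C₀ (max 0 (Real.log (lam2 / lam1)))]
    · exact h
  have htT : t ∈ Ioo 0 T := ⟨ht0, (hsub ht).2⟩
  have hC1 : 0 ≤ C := (le_max_left _ _).trans (le_max_right _ _)
  have hC2 : Real.log (lam2 / lam1) ≤ C := (le_max_right _ _).trans (le_max_right _ _)
  rcases (mem_closedBall_zero_iff.mp hx).lt_or_eq with hlt | heq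
  · have hxb : x ∈ ball (0 : EuclideanSpace ℝ (Fin n)) R := mem_ball_zero_iff.mpr hlt
    have hnhds : closedBall (0 : EuclideanSpace ℝ (Fin n)) R ∈ 𝓝 x :=
      mem_of_superset (isOpen_ball.mem_nhds hxb) ball_subset_closedBall
    have hlap := lap_sub_nonpos ((hsol.reg_space_v t htT).contDiffAt hnhds)
      ((hsol.reg_space_u t htT).contDiffAt hnhds)
      (by filter_upwards [hnhds] with z hz using hmax' z hz t ht)
    have htime : 0 ≤ deriv (v x) t - deriv (u x) t := by
      refine deriv_nonneg_of_left_max ((hsol.reg_time_v x hx t htT).hasDerivAt.sub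
        (hsol.reg_time_u x hx t htT).hasDerivAt) ?_
      filter_upwards [Ioo_mem_nhdsLT ht0] with s hs
      exact hmax' x hx s ⟨hs.1.le, hs.2.le.trans ht.2⟩
    rw [hsol.pde_u x hxb t htT, hsol.pde_v x hxb t htT] at htime
    have hstrict : lam2 * Real.exp (u x t) < lam1 * Real.exp (v x t) := by
      have h1 : lam2 / lam1 < Real.exp (v x t - u x t) :=
        (Real.log_lt_iff_lt_exp (div_pos hlam2 hlam1)).mp (hC2.trans_lt hw)
      rw [Real.exp_sub, div_lt_div_iff₀ hlam1 (Real.exp_pos _)] at h1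
      linarith
    linarith
  · have hd := (hasDerivAt_of_normalDeriv_eq_exp (hsol.bc_v x heq t htT)).sub
      (hasDerivAt_of_normalDeriv_eq_exp (hsol.bc_u x heq t htT))
    have hnn : 0 ≤ Real.exp (u x t) - Real.exp (v x t) := by
      refine deriv_nonneg_of_left_max hd ?_
      filter_upwards [Ioo_mem_nhdsLT (neg_lt_zero.mpr hR)] with s hs
      -- For `-R < s < 0` the point is `(1 + s/R) x`, which lies in the ball.
      have hmem : x + s • (R⁻¹ • x) ∈ closedBall (0 : EuclideanSpace ℝ (Fin n)) R := by
        have h1 : x + s • (R⁻¹ • x) = (1 + s * R⁻¹) • x := by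
          rw [add_smul, one_smul, mul_smul]
        have h2 : (1 + s * R⁻¹) * R = R + s := by field_simp
        have h3 : 0 ≤ 1 + s * R⁻¹ := by
          by_contra! hneg
          nlinarith [hs.1]
        rw [mem_closedBall_zero_iff, h1, norm_smul, heq, Real.norm_of_nonneg h3, h2]
        linarith [hs.2]
      simpa using hmax' _ hmem t ht
    have : Real.exp (u x t) < Real.exp (v x t) := Real.exp_lt_exp.mpr (by linarith)
    linarith

/-- Lemma 2.2: for a classical solution `(u,v)` of problem (1.1) on `[0,T)`, there exists
`M > 1` such that `e^v ≤ M e^u` and `e^u ≤ M e^v` on `cl(B_R) × [0,T)`. -/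
theorem exp_comparison {n : ℕ} (hn : 1 ≤ n) {R T lam1 lam2 : ℝ}
    (hR : 0 < R) (hT : 0 < T) (hlam1 : 0 < lam1) (hlam2 : 0 < lam2)
    {u v : EuclideanSpace ℝ (Fin n) → ℝ → ℝ} {u₀ v₀ : EuclideanSpace ℝ (Fin n) → ℝ}
    (hdata : AdmissibleData n R u₀ v₀)
    (hsol : IsClassicalSolution n R T lam1 lam2 u v u₀ v₀) :
    ∃ M : ℝ, 1 < M ∧ ∀ x ∈ closedBall (0 : EuclideanSpace ℝ (Fin n)) R, ∀ t ∈ Ico (0 : ℝ) T,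
      Real.exp (v x t) ≤ M * Real.exp (u x t) ∧ Real.exp (u x t) ≤ M * Real.exp (v x t) := by
  obtain ⟨C₁, h₁⟩ := exists_sub_le hR hT hlam1 hlam2 hsol
  obtain ⟨C₂, h₂⟩ := exists_sub_le hR hT hlam2 hlam1 hsol.swap
  refine ⟨Real.exp (max 1 (max C₁ C₂)), ?_, fun x hx t ht => ⟨?_, ?_⟩⟩
  · exact Real.one_lt_exp_iff.mpr (lt_of_lt_of_le one_pos (le_max_left _ _))
  · rw [← Real.exp_add, Real.exp_le_exp]
    linarith [h₁ x hx t ht, (le_max_left C₁ C₂).trans (le_max_right 1 _)]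
  · rw [← Real.exp_add, Real.exp_le_exp]
    linarith [h₂ x hx t ht, (le_max_right C₁ C₂).trans (le_max_right 1 _)]
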